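/- There is no finite saturated Nmatrix M = ⟨V, ⊞_M, D⟩ such that ⊢_M = ⊢_⊞. -/

import Mathlib

/-- Formulas built from countably many propositional variables with a single
binary connective `⊞` (platypus). -/
inductive Fm : Type where
  | var : ℕ → Fm
  | pl : Fm → Fm → Fm
deriving DecidableEq

namespace Fm

/-- The set of propositional variables occurring in a formula. -/
def vars : Fm → Set ℕ
  | var n => {n}
  | pl a b => vars a ∪ vars b

/-- A `𝔅_⊞`-valuation: a two-valued function such that
`v (φ ⊞ ψ) ∈ {min (v φ) (v ψ), max (v φ) (v ψ)}`. -/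
def IsVal (v : Fm → Bool) : Prop :=
  ∀ a b : Fm, v (a.pl b) = (v a && v b) ∨ v (a.pl b) = (v a || v b)

/-- The multiple-conclusion consequence `Γ ⊩_⊞ Δ`. -/
def Mc (Γ Δ : Set Fm) : Prop :=
  ∀ v : Fm → Bool, IsVal v → (∀ φ ∈ Γ, v φ = true) → ∃ ψ ∈ Δ, v ψ = true

/-- The single-conclusion consequence `Γ ⊢_⊞ φ`. -/
def Sc (Γ : Set Fm) (φ : Fm) : Prop := Mc Γ {φ}

end Fm

namespace Fm

/-- An `M`-valuation for an Nmatrix `⟨V, op, D⟩` with `op : V → V → ℘(V)∖{∅}`. -/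
def IsNVal {V : Type} (op : V → V → Set V) (v : Fm → V) : Prop :=
  ∀ a b : Fm, v (a.pl b) ∈ op (v a) (v b)

/-- The multiple-conclusion consequence `Γ ⊩_M Δ` of an Nmatrix. -/
def NMc {V : Type} (op : V → V → Set V) (D : Set V) (Γ Δ : Set Fm) : Prop :=
  ∀ v : Fm → V, IsNVal op v → (∀ φ ∈ Γ, v φ ∈ D) → ∃ ψ ∈ Δ, v ψ ∈ D

/-- The single-conclusion consequence `Γ ⊢_M φ` of an Nmatrix. -/
def NSc {V : Type} (op : V → V → Set V) (D : Set V) (Γ : Set Fm) (φ : Fm) : Prop :=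
  NMc op D Γ {φ}

end Fm

/-- Auxiliary valuation: variables get `x`, `p₀ ⊞ p₀` gets `d`, the rest is given by `f`. -/
def Fm.auxVal {V : Type} (x d : V) (f : V → V → V) : Fm → V
  | .var _ => x
  | .pl a b => if a = .var 0 ∧ b = .var 0 then d else f (auxVal x d f a) (auxVal x d f b)

/-- Auxiliary two-valued valuation: some variable other than `p_i` occurs. -/
def Fm.occVal (i : ℕ) : Fm → Bool
  | .var n => decide (n ≠ i)
  | .pl a b => occVal i a || occVal i b

open Fm in
/-- there is no finite saturated Nmatrix `M = ⟨V, ⊞_M, D⟩`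
(all outputs of `⊞_M` nonempty, and `Γ ⊬_M ψ` for all `ψ ∈ Δ` implies
`Γ ⊮_M Δ`) whose single-conclusion consequence is `⊢_⊞`. -/
theorem platypus_no_finite_saturated_nmatrix :
    ¬ ∃ (V : Type) (_ : Finite V) (op : V → V → Set V) (D : Set V),
      (∀ x y : V, (op x y).Nonempty) ∧
      (∀ Γ Δ : Set Fm, (∀ ψ ∈ Δ, ¬ NSc op D Γ ψ) → ¬ NMc op D Γ Δ) ∧
      (∀ (Γ : Set Fm) (φ : Fm), NSc op D Γ φ ↔ Sc Γ φ) := by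
  rintro ⟨V, hfin, op, D, hne, hsat, heq⟩
  choose f hf using hne
  have h1 := hsat {φ | ∃ i j : ℕ, i ≠ j ∧ φ = (var i).pl (var j)} {φ | ∃ i : ℕ, φ = var i} ?_
  · unfold NMc at h1
    push Not at h1
    obtain ⟨v, hv, hΓ, hΔ⟩ := h1
    obtain ⟨i, j, hij, hvij⟩ := Finite.exists_ne_map_eq_of_infinite (fun n : ℕ => v (var n))
    have hd : v ((var i).pl (var j)) ∈ D := hΓ _ ⟨i, j, hij, rfl⟩
    have hop := hv (var i) (var j)
    rw [← hvij] at hop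
    have hx : v (var i) ∉ D := hΔ _ ⟨i, rfl⟩
    have hsc : NSc op D {(var 0).pl (var 0)} (var 0) := by
      rw [heq]
      intro w hw hw1
      have := hw (var 0) (var 0)
      have h2 := hw1 _ rfl
      refine ⟨_, rfl, ?_⟩
      rw [h2] at this
      simpa using this
    obtain ⟨ψ, hψ, hψD⟩ := hsc (auxVal (v (var i)) (v ((var i).pl (var j))) f) (by
      intro a b
      simp only [auxVal]
      split_ifs with h
      · obtain ⟨rfl, rfl⟩ := h
        simpa only [auxVal] using hop
      · exact hf _ _) (by
      intro φ hφ
      rw [Set.mem_singleton_iff] at hφ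
      subst hφ
      simpa [auxVal] using hd)
    rw [Set.mem_singleton_iff] at hψ
    subst hψ
    exact hx (by simpa only [auxVal] using hψD)
  · rintro ψ ⟨i, rfl⟩
    rw [heq]
    intro h
    obtain ⟨ψ, hψ, hψ1⟩ := h (occVal i) (fun a b => Or.inr rfl) (by
      rintro φ ⟨a, b, hab, rfl⟩
      simp only [occVal, Bool.or_eq_true, decide_eq_true_eq]
      omega)
    rw [Set.mem_singleton_iff] at hψ
    subst hψ
    simp [occVal] at hψ1
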